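/- Primal-dual master inequality (core of Theorem 2): under the primal-dual mirror descent setup, if N_I ≥ 1 then h_f · N_I · f(x̄^N) ≤ ε_f · h_f · N_I + (R̄² − (ε_g²/(2M_g²))·N) + h_f · N_I · φ(λ^N), where φ(λ) = min_{x∈Q} ( f(x) + Σ_{l=1}^m λ_l g_l(x) ) and λ^N_l = (1/(h_f N_I)) Σ_{k∈J} h_g · 1[l(k) = l]. -/

import Mathlib

/-!
Fix `u ∈ Q`. The first-order optimality condition of a mirror step `z = Mirr_x(v)`, combined with the
three-point identity for the Bregman divergence and the strong convexity of `d`, gives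
`⟪v, x - u⟫ ≤ ‖v‖² / 2 + V_x(u) - V_z(u)` (`IsMirrorStep.inner_sub_le`).
Both step sizes are tuned so that `‖v‖² / 2 ≤ ε_g² / (2 M_g²)`. With the subgradient inequalities, a
productive step bounds `h_f (f(x^k) - f(u))` and a non-productive one bounds
`h_g (ε_g - g_{l(k)}(u))`, because there `g_{l(k)}(x^k) > ε_g`. The divergences telescope
(`sum_Icc_le_of_step`), leaving at most `V_{x¹}(u) ≤ R̄²`. The terms `h_g g_{l(k)}(u)` add up to
`h_f N_I Σ_l λ^N_l g_l(u)`, Jensen's inequality handles `f(x̄^N)`, and taking the infimum over `u`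
produces `φ(λ^N)`.
-/

open RealInnerProductSpace Finset

/-- The Bregman divergence `V_x(y) = d(y) - d(x) - ⟪∇d(x), y - x⟫`. -/
noncomputable def BregmanV {E : Type*} [NormedAddCommGroup E] [InnerProductSpace ℝ E]
    (d : E → ℝ) (Dd : E → E) (x y : E) : ℝ :=
  d y - d x - ⟪Dd x, y - x⟫

/-- `z = Mirr_x(v)`: `z` minimizes `y ↦ ⟪v, y - x⟫ + V_x(y)` over `Q`. -/
def IsMirrorStep {E : Type*} [NormedAddCommGroup E] [InnerProductSpace ℝ E]
    (Q : Set E) (d : E → ℝ) (Dd : E → E) (x v z : E) : Prop :=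
  z ∈ Q ∧ ∀ y ∈ Q, ⟪v, z - x⟫ + BregmanV d Dd x z ≤ ⟪v, y - x⟫ + BregmanV d Dd x y

lemma half_sq_le_bregmanV {E : Type*} [NormedAddCommGroup E] [InnerProductSpace ℝ E]
    {d : E → ℝ} {Dd : E → E}
    (hsc : ∀ z y, d y ≥ d z + ⟪Dd z, y - z⟫ + (1 / 2) * ‖y - z‖ ^ 2) (x y : E) :
    (1 / 2) * ‖y - x‖ ^ 2 ≤ BregmanV d Dd x y := by
  have := hsc x y
  unfold BregmanV
  linarith

/-- First-order optimality condition of the mirror step, as a variational inequality. -/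
lemma IsMirrorStep.inner_nonneg {E : Type*} [NormedAddCommGroup E] [InnerProductSpace ℝ E]
    [CompleteSpace E] {Q : Set E} (hQ : Convex ℝ Q) {d : E → ℝ} {Dd : E → E}
    (hd : ∀ z, HasGradientAt d (Dd z) z) {x v z u : E}
    (h : IsMirrorStep Q d Dd x v z) (hu : u ∈ Q) :
    0 ≤ ⟪v + Dd z - Dd x, u - z⟫ := by
  have hmin : IsMinOn (fun y => (⟪v - Dd x, y - x⟫ : ℝ) + d y) Q z := by
    intro y hy
    have := h.2 y hy
    simp only [BregmanV] at this
    simp only [Set.mem_ofPred_eq, inner_sub_left]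
    linarith
  have hder : HasFDerivAt (fun y => (⟪v - Dd x, y - x⟫ : ℝ) + d y)
      (innerSL ℝ (v - Dd x) + InnerProductSpace.toDual ℝ E (Dd z)) z := by
    refine HasFDerivAt.add ?_ (hd z).hasFDerivAt
    exact (innerSL ℝ (v - Dd x)).hasFDerivAt.comp z ((hasFDerivAt_id z).sub_const x)
  have hnn := hmin.localize.hasFDerivWithinAt_nonneg hder.hasFDerivWithinAt
    (sub_mem_posTangentConeAt_of_segment_subset (hQ.segment_subset h.1 hu))
  simp only [_root_.add_apply, innerSL_apply_apply,
    InnerProductSpace.toDual_apply_apply] at hnn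
  rw [← inner_add_left] at hnn
  convert hnn using 2
  abel

/-- The basic one-step estimate of mirror descent. -/
lemma IsMirrorStep.inner_sub_le {E : Type*} [NormedAddCommGroup E] [InnerProductSpace ℝ E]
    [CompleteSpace E] {Q : Set E} (hQ : Convex ℝ Q) {d : E → ℝ} {Dd : E → E}
    (hd : ∀ z, HasGradientAt d (Dd z) z)
    (hsc : ∀ z y, d y ≥ d z + ⟪Dd z, y - z⟫ + (1 / 2) * ‖y - z‖ ^ 2) {x v z u : E}
    (h : IsMirrorStep Q d Dd x v z) (hu : u ∈ Q) :
    ⟪v, x - u⟫ ≤ ‖v‖ ^ 2 / 2 + BregmanV d Dd x u - BregmanV d Dd z u := by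
  have hopt := h.inner_nonneg hQ hd hu
  have hV := half_sq_le_bregmanV hsc x z
  have hCS : ⟪v, x - z⟫ ≤ ‖v‖ * ‖z - x‖ := norm_sub_rev x z ▸ real_inner_le_norm v (x - z)
  have hAG := sq_nonneg (‖v‖ - ‖z - x‖)
  -- the three-point identity
  have h3 : BregmanV d Dd x u - BregmanV d Dd z u - BregmanV d Dd x z
      = ⟪Dd z - Dd x, u - z⟫ := by
    simp only [BregmanV, inner_sub_left, inner_sub_right]
    ring
  have hsplit : ⟪v + Dd z - Dd x, u - z⟫
      = ⟪Dd z - Dd x, u - z⟫ + ⟪v, x - z⟫ - ⟪v, x - u⟫ := by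
    simp only [inner_sub_left, inner_sub_right, inner_add_left]
    ring
  nlinarith

lemma sum_Icc_le_of_step (c V : ℕ → ℝ) (C : ℝ) (N : ℕ)
    (h : ∀ k, 1 ≤ k → k ≤ N → c k ≤ C + V k - V (k + 1)) :
    ∑ k ∈ Finset.Icc 1 N, c k ≤ C * N + V 1 - V (N + 1) := by
  induction N with
  | zero => simp
  | succ n ih =>
    rw [Finset.sum_Icc_succ_top (by omega)]
    have h1 := ih fun k hk hkn => h k hk (by omega)
    have h2 := h (n + 1) (by omega) le_rfl
    push_cast
    linarith

/-- **Primal-dual master inequality (core of Theorem 2).**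
Under the primal-dual mirror descent setup, if `N_I ≥ 1` then
`h_f·N_I·f(x̄^N) ≤ ε_f·h_f·N_I + (R̄² - (ε_g²/(2M_g²))·N) + h_f·N_I·φ(λ^N)`,
where `φ(λ) = min_{x∈Q} (f(x) + Σ_l λ_l g_l(x))` and
`λ^N_l = (1/(h_f N_I)) Σ_{k∈J} h_g·1[l(k)=l]`. -/
theorem mirror_descent_primal_dual_master_inequality
    {E : Type*} [NormedAddCommGroup E] [InnerProductSpace ℝ E] [CompleteSpace E]
    (Q : Set E) (hQne : Q.Nonempty) (hQcp : IsCompact Q) (hQcv : Convex ℝ Q)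
    (d : E → ℝ) (Dd : E → E) (hdiff : ∀ z, HasGradientAt d (Dd z) z)
    (hsc : ∀ z y, d y ≥ d z + ⟪Dd z, y - z⟫ + (1 / 2) * ‖y - z‖ ^ 2)
    (Rbar2 : ℝ)
    (hRbar2 : IsGreatest {r | ∃ a ∈ Q, ∃ b ∈ Q, BregmanV d Dd a b = r} Rbar2)
    (m : ℕ) (hm : 0 < m)
    (f : E → ℝ) (hfc : ContinuousOn f Q) (hf : ConvexOn ℝ Q f)
    (gl : Fin m → E → ℝ) (hglc : ∀ l, ContinuousOn (gl l) Q)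
    (hgl : ∀ l, ConvexOn ℝ Q (gl l))
    (g : E → ℝ) (hgmax : ∀ z, IsGreatest (Set.range fun l => gl l z) (g z))
    (Df : E → E)
    (hDf : ∀ z ∈ Q, ∀ u ∈ Q, f z + ⟪Df z, u - z⟫ ≤ f u)
    (Mf Mg : ℝ) (hMf : 0 < Mf) (hMg : 0 < Mg)
    (hDfb : ∀ z ∈ Q, ‖Df z‖ ≤ Mf)
    (εg εf sf sg : ℝ) (hεg : 0 < εg)
    (hεf : εf = Mf * εg / Mg) (hsf : sf = εg / (Mf * Mg)) (hsg : sg = εg / Mg ^ 2)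
    (N : ℕ) (x : ℕ → E) (lsel : ℕ → Fin m) (Dgk : ℕ → E)
    (hx1Q : x 1 ∈ Q) (hx1min : ∀ y ∈ Q, d (x 1) ≤ d y)
    (hiterf : ∀ k, 1 ≤ k → k ≤ N → g (x k) ≤ εg →
      IsMirrorStep Q d Dd (x k) (sf • Df (x k)) (x (k + 1)))
    (hiterg : ∀ k, 1 ≤ k → k ≤ N → εg < g (x k) →
      g (x k) = gl (lsel k) (x k) ∧
      (∀ u ∈ Q, gl (lsel k) (x k) + ⟪Dgk k, u - x k⟫ ≤ gl (lsel k) u) ∧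
      ‖Dgk k‖ ≤ Mg ∧
      IsMirrorStep Q d Dd (x k) (sg • Dgk k) (x (k + 1)))
    (I J : Finset ℕ)
    (hI : I = (Finset.Icc 1 N).filter fun k => g (x k) ≤ εg)
    (hJ : J = Finset.Icc 1 N \ I)
    (hNI : 1 ≤ I.card)
    (xbar : E) (hxbar : xbar = (I.card : ℝ)⁻¹ • ∑ k ∈ I, x k)
    (lamN : Fin m → ℝ)
    (hlamN : ∀ i, lamN i = (sf * I.card)⁻¹ * ∑ k ∈ J, if lsel k = i then sg else 0) :
    sf * I.card * f xbar ≤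
      εf * sf * I.card + (Rbar2 - εg ^ 2 / (2 * Mg ^ 2) * N) +
        sf * I.card * sInf ((fun z => f z + ∑ i, lamN i * gl i z) '' Q) := by
  have hsf0 : 0 < sf := by rw [hsf]; positivity
  have hsg0 : 0 < sg := by rw [hsg]; positivity
  have hI0 : (0 : ℝ) < I.card := by exact_mod_cast hNI
  have hp : 0 < sf * I.card := mul_pos hsf0 hI0
  have hxQ : ∀ k, 1 ≤ k → k ≤ N + 1 → x k ∈ Q := by
    intro k hk hkN
    obtain ⟨j, rfl⟩ : ∃ j, k = j + 1 := ⟨k - 1, by omega⟩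
    rcases Nat.eq_zero_or_pos j with rfl | hj
    · exact hx1Q
    · rcases le_or_gt (g (x j)) εg with hg | hg
      · exact (hiterf j hj (by omega) hg).1
      · exact (hiterg j hj (by omega) hg).2.2.2.1
  have hIsub : I ⊆ Finset.Icc 1 N := by rw [hI]; exact Finset.filter_subset _ _
  have hmemI : ∀ k ∈ I, 1 ≤ k ∧ k ≤ N ∧ g (x k) ≤ εg := by
    intro k hk
    rw [hI, Finset.mem_filter, Finset.mem_Icc] at hk
    exact ⟨hk.1.1, hk.1.2, hk.2⟩
  have hJensen : sf * I.card * f xbar ≤ sf * ∑ k ∈ I, f (x k) := by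
    have hJ' := hf.map_sum_le (t := I) (w := fun _ => (I.card : ℝ)⁻¹) (p := x)
      (fun _ _ => by positivity) (by simp [hI0.ne'])
      (fun k hk => hxQ k (hmemI k hk).1 (by have := (hmemI k hk).2.1; omega))
    rw [← Finset.smul_sum, ← hxbar, ← Finset.smul_sum, smul_eq_mul] at hJ'
    calc sf * I.card * f xbar
        ≤ sf * I.card * ((I.card : ℝ)⁻¹ * ∑ k ∈ I, f (x k)) :=
          mul_le_mul_of_nonneg_left hJ' hp.le
      _ = sf * ∑ k ∈ I, f (x k) := by field_simp
  have hC : εg * sg = 2 * (εg ^ 2 / (2 * Mg ^ 2)) := by rw [hsg]; field_simp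
  have hCf : εf * sf = 2 * (εg ^ 2 / (2 * Mg ^ 2)) := by rw [hεf, hsf]; field_simp
  -- step-size tuning: both kinds of step have the same quadratic error
  have hsfM : (sf * Mf) ^ 2 / 2 = εg ^ 2 / (2 * Mg ^ 2) := by rw [hsf]; field_simp
  have hsgM : (sg * Mg) ^ 2 / 2 = εg ^ 2 / (2 * Mg ^ 2) := by rw [hsg]; field_simp
  have hcard : (I.card : ℝ) + J.card = N := by
    have h := Finset.card_sdiff_add_card_eq_card hIsub
    rw [← hJ, Nat.card_Icc, Nat.add_sub_cancel] at h
    rw [add_comm]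
    exact_mod_cast h
  set C := εg ^ 2 / (2 * Mg ^ 2) with hCdef
  have key : ∀ u ∈ Q, sf * I.card * f xbar ≤ εf * sf * I.card + (Rbar2 - C * N) +
      sf * I.card * (f u + ∑ i, lamN i * gl i u) := by
    intro u hu
    have hdual : sf * I.card * ∑ i, lamN i * gl i u = ∑ k ∈ J, sg * gl (lsel k) u := by
      have : ∀ i, sf * I.card * (lamN i * gl i u)
          = ∑ k ∈ J, if lsel k = i then sg * gl i u else 0 := by
        intro i
        rw [hlamN, ← mul_assoc, mul_inv_cancel_left₀ hp.ne', Finset.sum_mul]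
        exact Finset.sum_congr rfl fun k _ => by rw [ite_mul, zero_mul]
      rw [Finset.mul_sum, Finset.sum_congr rfl fun i _ => this i, Finset.sum_comm]
      simp
    have htel := sum_Icc_le_of_step
      (fun k => if k ∈ I then sf * (f (x k) - f u) else sg * (εg - gl (lsel k) u))
      (fun k => BregmanV d Dd (x k) u) C N (by
        intro k hk hkN
        have hxk := hxQ k hk (by omega)
        by_cases hg : g (x k) ≤ εg
        · have hkI : k ∈ I := by
            rw [hI, Finset.mem_filter, Finset.mem_Icc]; exact ⟨⟨hk, hkN⟩, hg⟩
          have hs := (hiterf k hk hkN hg).inner_sub_le hQcv hdiff hsc hu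
          have hn : ‖sf • Df (x k)‖ ^ 2 / 2 ≤ C := by
            rw [← hsfM, norm_smul, Real.norm_of_nonneg hsf0.le]
            have := hDfb _ hxk
            gcongr
          have hsub := mul_le_mul_of_nonneg_left (hDf _ hxk u hu) hsf0.le
          rw [← neg_sub u (x k), inner_neg_right, real_inner_smul_left] at hs
          simp only [hkI, if_true]
          linarith
        · have hkI : k ∉ I := fun h => hg (hmemI k h).2.2
          obtain ⟨hl, hD, hDb, hstep⟩ := hiterg k hk hkN (not_le.mp hg)
          have hs := hstep.inner_sub_le hQcv hdiff hsc hu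
          have hn : ‖sg • Dgk k‖ ^ 2 / 2 ≤ C := by
            rw [← hsgM, norm_smul, Real.norm_of_nonneg hsg0.le]
            gcongr
          have hsub := mul_le_mul_of_nonneg_left (hD u hu) hsg0.le
          have hviol := mul_le_mul_of_nonneg_left (hl ▸ (not_le.mp hg).le) hsg0.le
          rw [← neg_sub u (x k), inner_neg_right, real_inner_smul_left] at hs
          simp only [hkI, if_false]
          linarith)
    have hV0 : 0 ≤ BregmanV d Dd (x (N + 1)) u :=
      le_trans (by positivity) (half_sq_le_bregmanV hsc (x (N + 1)) u)
    have hV1 : BregmanV d Dd (x 1) u ≤ Rbar2 := hRbar2.2 ⟨x 1, hx1Q, u, hu, rfl⟩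
    have hsI : ∑ k ∈ I, (if k ∈ I then sf * (f (x k) - f u) else sg * (εg - gl (lsel k) u))
        = sf * ∑ k ∈ I, f (x k) - sf * I.card * f u := by
      rw [Finset.sum_congr rfl fun k hk => if_pos hk, ← Finset.mul_sum, Finset.sum_sub_distrib,
        Finset.sum_const, nsmul_eq_mul]
      ring
    have hsJ : ∑ k ∈ J, (if k ∈ I then sf * (f (x k) - f u) else sg * (εg - gl (lsel k) u))
        = εg * sg * J.card - ∑ k ∈ J, sg * gl (lsel k) u := by
      rw [Finset.sum_congr rfl fun k hk => if_neg (Finset.mem_sdiff.mp (hJ ▸ hk)).2,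
        ← Finset.mul_sum, Finset.sum_sub_distrib, Finset.sum_const, nsmul_eq_mul,
        ← Finset.mul_sum]
      ring
    rw [← Finset.sum_sdiff hIsub, ← hJ, hsI, hsJ, hC] at htel
    rw [mul_add, hdual, hCf]
    have hN : C * N = C * I.card + C * J.card := by rw [← hcard]; ring
    linarith
  have hinf : (sf * I.card * f xbar - (εf * sf * I.card + (Rbar2 - C * N))) / (sf * I.card)
      ≤ sInf ((fun z => f z + ∑ i, lamN i * gl i z) '' Q) := by
    refine le_csInf (hQne.image _) ?_
    rintro _ ⟨u, hu, rfl⟩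
    rw [div_le_iff₀' hp]
    linarith [key u hu]
  rw [div_le_iff₀' hp] at hinf
  linarith
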